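/- arXiv:2412.18761 — 2 statements merged into one kernel-verified Lean document; each statement's English description precedes it below -/
import Mathlib

section
/- Let φ: [0,∞) → ℝ be continuous and strictly decreasing with φ(0) = 1 and φ(t) → 0 as t → ∞, and suppose φ is slowly varying at ∞ (i.e. φ(λt)/φ(t) → 1 as t → ∞ for every λ > 0). Then for every d ≥ 2 and every w = (w₁, …, w_d) ∈ (0,∞)^d, the limit lim_{u→0⁺} φ(∑_{i=1}^d φ⁻¹(u·wᵢ)) / u exists and equals min{w₁, …, w_d}. -/
open Filter Topology

/-!
Let `wⱼ` be the smallest weight and put `s = φ⁻¹(u wⱼ)`. Since `φ⁻¹` is nonnegative and decreasing,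
`s ≤ ∑ᵢ φ⁻¹(u wᵢ) ≤ d s`. As `u → 0⁺`, `s → ∞`, so slow variation makes `φ` asymptotically blind to
the factor `d`: `φ(∑ᵢ φ⁻¹(u wᵢ)) ~ φ(s) = u wⱼ`.
-/

/-- Slow variation at `∞` in the sense of Karamata. Neither measurability nor positivity is built
in; by Lean's convention `x / 0 = 0`, the case `c = 1` forces `f` to be eventually nonzero. -/
def IsSlowlyVarying (f : ℝ → ℝ) : Prop :=
  ∀ c > (0 : ℝ), Tendsto (fun t => f (c * t) / f t) atTop (𝓝 1)

namespace IsSlowlyVarying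

variable {f : ℝ → ℝ} {a : ℝ}

theorem eventually_ne_zero (hf : IsSlowlyVarying f) : ∀ᶠ t in atTop, f t ≠ 0 := by
  filter_upwards [(hf 1 one_pos).eventually_ne one_ne_zero] with t ht hft
  exact ht (by rw [hft, div_zero])

theorem pos_of_antitoneOn_of_tendsto_zero (hf : IsSlowlyVarying f)
    (hanti : AntitoneOn f (Set.Ici a)) (hlim : Tendsto f atTop (𝓝 0)) {t : ℝ} (ht : a ≤ t) :
    0 < f t := by
  have hnonneg : ∀ x, a ≤ x → 0 ≤ f x := fun x hx =>
    le_of_tendsto hlim <| (eventually_ge_atTop x).mono fun y hxy => hanti hx (hx.trans hxy) hxy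
  obtain ⟨x, hfx, htx⟩ := (hf.eventually_ne_zero.and (eventually_ge_atTop t)).exists
  have hax : a ≤ x := ht.trans htx
  exact ((hnonneg x hax).lt_of_ne' hfx).trans_le (hanti ht hax htx)

theorem tendsto_div_of_le_of_le {α : Type*} {l : Filter α} {s S : α → ℝ} {c : ℝ}
    (hf : IsSlowlyVarying f) (hanti : AntitoneOn f (Set.Ici a)) (hpos : ∀ᶠ t in atTop, 0 < f t)
    (hc : 0 < c) (hs : Tendsto s l atTop) (hsS : ∀ᶠ x in l, s x ≤ S x)
    (hSs : ∀ᶠ x in l, S x ≤ c * s x) :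
    Tendsto (fun x => f (S x) / f (s x)) l (𝓝 1) := by
  refine tendsto_of_tendsto_of_tendsto_of_le_of_le' ((hf c hc).comp hs) tendsto_const_nhds ?_ ?_
  · filter_upwards [hsS, hSs, hs.eventually_ge_atTop a, hs.eventually hpos] with x hsS hSs has hfs
    have haS : a ≤ S x := has.trans hsS
    exact div_le_div_of_nonneg_right (hanti haS (haS.trans hSs) hSs) hfs.le
  · filter_upwards [hsS, hs.eventually_ge_atTop a, hs.eventually hpos] with x hsS has hfs
    exact (div_le_one hfs).2 (hanti has (has.trans hsS) hsS)

end IsSlowlyVarying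

theorem tendsto_atTop_of_antitoneOn_of_tendsto_comp {α β γ : Type*} [LinearOrder α]
    [LinearOrder β] [TopologicalSpace β] [ClosedIciTopology β] {l : Filter γ} {f : α → β}
    {g : γ → α} {a : α} {b : β}
    (hf : AntitoneOn f (Set.Ici a)) (hb : ∀ t, a ≤ t → b < f t) (hg : ∀ᶠ x in l, a ≤ g x)
    (hfg : Tendsto (fun x => f (g x)) l (𝓝 b)) : Tendsto g l atTop := by
  refine tendsto_atTop.2 fun M => ?_
  have haM : a ≤ max M a := le_max_right M a
  filter_upwards [hg, hfg.eventually_lt_const (hb _ haM)] with x hax hx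
  exact (le_max_left M a).trans (hf.reflect_lt hax haM hx).le

theorem tendsto_mul_const_nhdsGT_zero {𝕜 : Type*} [Field 𝕜] [LinearOrder 𝕜] [IsStrictOrderedRing 𝕜]
    [TopologicalSpace 𝕜] [OrderTopology 𝕜] {c : 𝕜} (hc : 0 < c) :
    Tendsto (fun x => x * c) (𝓝[>] 0) (𝓝[>] 0) := by
  simpa only [mul_comm] using tendsto_iff_comap.2 (comap_mulLeft_nhdsGT_zero hc).ge

theorem sum_mem_Icc_of_antitoneOn {α ι R : Type*} [Preorder α] [Fintype ι] [Semiring R]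
    [PartialOrder R] [IsOrderedAddMonoid R] {g : α → R} {s : Set α} {x : ι → α} {j : ι}
    (hg : AntitoneOn g s) (hx : ∀ i, x i ∈ s) (hnonneg : ∀ i, 0 ≤ g (x i)) (hj : ∀ i, x j ≤ x i) :
    ∑ i, g (x i) ∈ Set.Icc (g (x j)) (Fintype.card ι * g (x j)) := by
  constructor
  · exact Finset.single_le_sum (fun i _ => hnonneg i) (Finset.mem_univ j)
  · rw [← nsmul_eq_mul]
    exact Finset.sum_le_card_nsmul _ _ _ fun i _ => hg (hx j) (hx i) (hj i)

theorem archimedean_lower_tail_dependence_slowly_varying_general {ι : Type*} [Fintype ι]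
    [Nonempty ι] {φ ψ : ℝ → ℝ} {w : ι → ℝ} (hanti : AntitoneOn φ (Set.Ici 0))
    (hlim : Tendsto φ atTop (𝓝 0)) (hψ : ∀ᶠ u in 𝓝[>] (0 : ℝ), 0 ≤ ψ u ∧ φ (ψ u) = u)
    (hSV : IsSlowlyVarying φ) (hw : ∀ i, 0 < w i) :
    Tendsto (fun u => φ (∑ i, ψ (u * w i)) / u) (𝓝[>] (0 : ℝ)) (𝓝 (⨅ i, w i)) := by
  have hpos : ∀ t, 0 ≤ t → 0 < φ t := fun t => hSV.pos_of_antitoneOn_of_tendsto_zero hanti hlim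
  obtain ⟨j, hj⟩ := exists_eq_ciInf_of_finite (f := w)
  have hmin : ∀ i, w j ≤ w i := fun i => hj ▸ ciInf_le (Set.finite_range w).bddBelow i
  have hψanti : AntitoneOn ψ {v | 0 ≤ ψ v ∧ φ (ψ v) = v} :=
    Function.antitoneOn_of_rightInvOn_of_mapsTo hanti (fun _ hv => hv.2) fun _ hv => hv.1
  have hψw : ∀ᶠ u in 𝓝[>] 0, ∀ i, 0 ≤ ψ (u * w i) ∧ φ (ψ (u * w i)) = u * w i :=
    eventually_all.2 fun i => (tendsto_mul_const_nhdsGT_zero (hw i)).eventually hψ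
  have hψtop : Tendsto ψ (𝓝[>] 0) atTop :=
    tendsto_atTop_of_antitoneOn_of_tendsto_comp hanti hpos (hψ.mono fun _ hu => hu.1) <|
      (tendsto_id.mono_left nhdsWithin_le_nhds).congr' (hψ.mono fun _ hu => hu.2.symm)
  have hsum : ∀ᶠ u in 𝓝[>] 0,
      ∑ i, ψ (u * w i) ∈ Set.Icc (ψ (u * w j)) (Fintype.card ι * ψ (u * w j)) := by
    filter_upwards [hψw, self_mem_nhdsWithin] with u hu (hu0 : 0 < u)
    exact sum_mem_Icc_of_antitoneOn hψanti hu (fun i => (hu i).1) fun i =>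
      mul_le_mul_of_nonneg_left (hmin i) hu0.le
  have hratio : Tendsto (fun u => φ (∑ i, ψ (u * w i)) / φ (ψ (u * w j))) (𝓝[>] 0) (𝓝 1) :=
    hSV.tendsto_div_of_le_of_le hanti ((eventually_ge_atTop 0).mono hpos)
      (Nat.cast_pos.2 Fintype.card_pos) (hψtop.comp (tendsto_mul_const_nhdsGT_zero (hw j)))
      (hsum.mono fun _ hu => hu.1) (hsum.mono fun _ hu => hu.2)
  rw [← hj, ← one_mul (w j)]
  refine (hratio.mul_const (w j)).congr' ?_
  filter_upwards [hψw] with u hu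
  rw [(hu j).2, ← div_div, div_mul_cancel₀ _ (hw j).ne']

/-- Theorem 2.4: lower tail dependence of an Archimedean copula whose Laplace
transform `φ` is slowly varying at `∞` equals the minimum of the weights. -/
theorem archimedean_lower_tail_dependence_slowly_varying
    (φ φinv : ℝ → ℝ)
    (hcont : ContinuousOn φ (Set.Ici 0))
    (hanti : StrictAntiOn φ (Set.Ici 0))
    (hφ0 : φ 0 = 1)
    (hφtop : Tendsto φ atTop (𝓝 0))
    (hinv : ∀ u ∈ Set.Ioc (0:ℝ) 1, 0 ≤ φinv u ∧ φ (φinv u) = u)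
    (hSV : ∀ lam > (0:ℝ), Tendsto (fun t => φ (lam * t) / φ t) atTop (𝓝 1))
    (d : ℕ) (hd : 2 ≤ d) (w : Fin d → ℝ) (hw : ∀ i, 0 < w i) :
    Tendsto (fun u => φ (∑ i, φinv (u * w i)) / u) (𝓝[>] (0:ℝ))
      (𝓝 (⨅ i, w i)) := by
  have : NeZero d := ⟨by lia⟩
  exact archimedean_lower_tail_dependence_slowly_varying_general hanti.antitoneOn hφtop
    (eventually_of_mem (Ioc_mem_nhdsGT one_pos) hinv) hSV hw
end

section
/- Let 0 ≤ θ < 1 and α > 0, and let φ(t) = ((1−θ)e^{−t}/(1 − θe^{−t}))^α for t ≥ 0, with inverse φ⁻¹ on (0,1]. Then for all w₁ > 0 and w₂ > 0, lim_{u→0⁺} φ(φ⁻¹(u·w₁) + φ⁻¹(u·w₂)) / u² = (1−θ)^{−α}·w₁·w₂. -/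
open Filter Topology

/-!
A generator `φ` with `φ t * exp (α t) → c` is asymptotically multiplicative: for large `tᵢ`,
`φ (∑ tᵢ) ≈ c exp (-α ∑ tᵢ) ≈ c / c ^ d * ∏ φ (tᵢ)`, where `d` is the number of summands. Taking
`tᵢ = φ⁻¹ (u wᵢ)`, which tends to infinity as `u → 0⁺`, turns the product into `u ^ d * ∏ wᵢ`. For
the negative binomial generator `c = (1 - θ) ^ α`.
-/

section Limits

theorem tendsto_finsetSum_atTop {ι κ M : Type*} [AddCommMonoid M] [Preorder M]
    [IsOrderedAddMonoid M] {s : Finset ι} (hs : s.Nonempty) {l : Filter κ} {f : ι → κ → M}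
    (hf : ∀ i ∈ s, Tendsto (f i) l atTop) : Tendsto (fun x ↦ ∑ i ∈ s, f i x) l atTop := by
  induction hs using Finset.Nonempty.cons_induction with
  | singleton i => simpa only [Finset.sum_singleton] using hf i (Finset.mem_singleton_self i)
  | cons i s his _ ih =>
    simp only [Finset.sum_cons]
    exact (hf i (Finset.mem_cons_self i s)).atTop_add_atTop
      (ih fun j hj ↦ hf j (Finset.mem_cons_of_mem hj))

theorem tendsto_atTop_of_antitoneOn {κ X Y : Type*} [LinearOrder X] [LinearOrder Y]
    [TopologicalSpace Y] [ClosedIciTopology Y] {φ : X → Y} {a : X} {b : Y}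
    (hφ : AntitoneOn φ (Set.Ici a)) (hb : ∀ x ∈ Set.Ici a, b < φ x) {l : Filter κ} {x : κ → X}
    (hx : ∀ᶠ k in l, a ≤ x k) (hφx : Tendsto (fun k ↦ φ (x k)) l (𝓝 b)) :
    Tendsto x l atTop := by
  refine tendsto_atTop.2 fun m ↦ ?_
  have hm : max a m ∈ Set.Ici a := le_max_left a m
  filter_upwards [hx, hφx.eventually_lt_const (hb _ hm)] with k hk hlt
  exact (le_max_right a m).trans (le_of_not_gt fun h ↦ hlt.not_ge (hφ hk hm h.le))

end Limits

/-- The Archimedean copula with generator `φ`, where `ψ` stands for the inverse of `φ`. The two are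
independent arguments, since only the values of `ψ` on `(0, 1]` are determined by `φ`. -/
def archimedeanCopula {ι : Type*} [Fintype ι] (φ ψ : ℝ → ℝ) (u : ι → ℝ) : ℝ :=
  φ (∑ i, ψ (u i))

section ExponentialTail

variable {ι : Type*} [Fintype ι] [Nonempty ι] {φ : ℝ → ℝ} {α c : ℝ}

theorem tendsto_apply_sum_div_prod (hφ : Tendsto (fun t ↦ φ t * Real.exp (α * t)) atTop (𝓝 c))
    (hc : c ≠ 0) {κ : Type*} {l : Filter κ} {t : ι → κ → ℝ} (ht : ∀ i, Tendsto (t i) l atTop) :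
    Tendsto (fun k ↦ φ (∑ i, t i k) / ∏ i, φ (t i k)) l (𝓝 (c / c ^ Fintype.card ι)) := by
  have hnum := hφ.comp (tendsto_finsetSum_atTop Finset.univ_nonempty fun i _ ↦ ht i)
  have hden : Tendsto (fun k ↦ ∏ i, φ (t i k) * Real.exp (α * t i k)) l
      (𝓝 (c ^ Fintype.card ι)) := by
    simpa only [Function.comp_apply, Finset.prod_const, Finset.card_univ] using
      tendsto_finsetProd Finset.univ fun i _ ↦ hφ.comp (ht i)
  refine (hnum.div hden (pow_ne_zero _ hc)).congr fun k ↦ ?_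
  simp only [Pi.div_apply, Function.comp_apply]
  rw [Finset.prod_mul_distrib, ← Real.exp_sum, ← Finset.mul_sum]
  exact mul_div_mul_right _ _ (Real.exp_ne_zero _)

theorem tendsto_archimedeanCopula_div_pow {ψ : ℝ → ℝ} {w : ι → ℝ}
    (hφ_anti : AntitoneOn φ (Set.Ici 0)) (hφ_pos : ∀ t ∈ Set.Ici 0, 0 < φ t)
    (hφ : Tendsto (fun t ↦ φ t * Real.exp (α * t)) atTop (𝓝 c)) (hc : c ≠ 0)
    (hψ : ∀ᶠ u in 𝓝[>] 0, 0 ≤ ψ u ∧ φ (ψ u) = u) (hw : ∀ i, 0 < w i) :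
    Tendsto (fun u ↦ archimedeanCopula φ ψ (u • w) / u ^ Fintype.card ι) (𝓝[>] 0)
      (𝓝 (c / c ^ Fintype.card ι * ∏ i, w i)) := by
  have hψ_top : Tendsto ψ (𝓝[>] 0) atTop :=
    tendsto_atTop_of_antitoneOn hφ_anti hφ_pos (hψ.mono fun _ h ↦ h.1) <|
      (tendsto_nhdsWithin_of_tendsto_nhds tendsto_id).congr' (hψ.mono fun _ h ↦ h.2.symm)
  have hscale (i : ι) : Tendsto (· * w i) (𝓝[>] 0) (𝓝[>] 0) :=
    tendsto_iff_comap.2 (by simpa only [mul_comm] using (comap_mulLeft_nhdsGT_zero (hw i)).ge)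
  have hratio := tendsto_apply_sum_div_prod hφ hc fun i ↦ hψ_top.comp (hscale i)
  refine (hratio.mul_const (∏ i, w i)).congr' ?_
  filter_upwards [eventually_all.2 fun i ↦ (hscale i).eventually hψ] with u hu
  have hprod : ∏ i, φ (ψ (u * w i)) = u ^ Fintype.card ι * ∏ i, w i := by
    rw [Finset.prod_congr rfl fun i _ ↦ (hu i).2, Finset.prod_mul_distrib, Finset.prod_const,
      Finset.card_univ]
  simp only [Function.comp_apply, hprod, archimedeanCopula, Pi.smul_apply, smul_eq_mul]
  exact div_mul_eq_mul_div _ _ _ |>.trans <|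
    mul_div_mul_right _ _ (Finset.prod_pos fun i _ ↦ hw i).ne'

end ExponentialTail

/-- The Laplace transform, for `0 ≤ θ < 1`, of a shifted negative binomial variable, as a generator
of Archimedean copulas. Only its values at `t ≥ 0` matter: below `0` the denominator may vanish. -/
noncomputable def negativeBinomialGenerator (θ α t : ℝ) : ℝ :=
  ((1 - θ) * Real.exp (-t) / (1 - θ * Real.exp (-t))) ^ α

namespace negativeBinomialGenerator

variable {θ α t : ℝ}

theorem one_sub_mul_exp_neg_pos (hθ : θ < 1) (ht : 0 ≤ t) : 0 < 1 - θ * Real.exp (-t) := by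
  have he : Real.exp (-t) ≤ 1 := Real.exp_le_one_iff.2 (neg_nonpos.2 ht)
  nlinarith [Real.exp_pos (-t)]

theorem base_pos (hθ : θ < 1) (ht : 0 ≤ t) :
    0 < (1 - θ) * Real.exp (-t) / (1 - θ * Real.exp (-t)) :=
  div_pos (mul_pos (sub_pos.2 hθ) (Real.exp_pos _)) (one_sub_mul_exp_neg_pos hθ ht)

protected theorem pos (hθ : θ < 1) (ht : 0 ≤ t) : 0 < negativeBinomialGenerator θ α t :=
  Real.rpow_pos_of_pos (base_pos hθ ht) α

protected theorem antitoneOn (hθ : θ < 1) (hα : 0 ≤ α) :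
    AntitoneOn (negativeBinomialGenerator θ α) (Set.Ici 0) := by
  intro s hs t ht hst
  have hexp : (1 - θ) * Real.exp (-t) ≤ (1 - θ) * Real.exp (-s) :=
    mul_le_mul_of_nonneg_left (Real.exp_le_exp.2 (neg_le_neg hst)) (sub_pos.2 hθ).le
  refine Real.rpow_le_rpow (base_pos hθ ht).le ?_ hα
  rw [div_le_div_iff₀ (one_sub_mul_exp_neg_pos hθ ht) (one_sub_mul_exp_neg_pos hθ hs)]
  linarith

theorem mul_exp (hθ : θ < 1) (ht : 0 ≤ t) :
    negativeBinomialGenerator θ α t * Real.exp (α * t) =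
      ((1 - θ) / (1 - θ * Real.exp (-t))) ^ α := by
  rw [negativeBinomialGenerator, mul_comm α, Real.exp_mul,
    ← Real.mul_rpow (base_pos hθ ht).le (Real.exp_pos t).le, div_mul_eq_mul_div, mul_assoc,
    ← Real.exp_add, neg_add_cancel, Real.exp_zero, mul_one]

theorem tendsto_mul_exp (hθ : θ < 1) :
    Tendsto (fun t ↦ negativeBinomialGenerator θ α t * Real.exp (α * t)) atTop
      (𝓝 ((1 - θ) ^ α)) := by
  have hden : Tendsto (fun t ↦ 1 - θ * Real.exp (-t)) atTop (𝓝 1) := by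
    simpa using (Real.tendsto_exp_neg_atTop_nhds_zero.const_mul θ).const_sub 1
  have hbase : Tendsto (fun t ↦ (1 - θ) / (1 - θ * Real.exp (-t))) atTop (𝓝 (1 - θ)) := by
    simpa only [div_one, Pi.div_def] using
      (tendsto_const_nhds (x := 1 - θ)).div hden one_ne_zero
  refine (hbase.rpow_const (.inl (sub_pos.2 hθ).ne')).congr' ?_
  filter_upwards [eventually_ge_atTop 0] with t ht using (mul_exp hθ ht).symm

end negativeBinomialGenerator

theorem negative_binomial_copula_second_order_tail_dependence_general
    {ι : Type*} [Fintype ι] [Nonempty ι] {θ α : ℝ} (hθ : θ < 1) (hα : 0 < α) {φ φinv : ℝ → ℝ}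
    (hφ : ∀ t ≥ 0, φ t = negativeBinomialGenerator θ α t)
    (hinv : ∀ u ∈ Set.Ioc 0 1, 0 ≤ φinv u ∧ φ (φinv u) = u)
    {w : ι → ℝ} (hw : ∀ i, 0 < w i) :
    Tendsto (fun u ↦ archimedeanCopula φ φinv (u • w) / u ^ Fintype.card ι) (𝓝[>] 0)
      (𝓝 ((1 - θ) ^ (α * (1 - Fintype.card ι)) * ∏ i, w i)) := by
  have hc : 0 < 1 - θ := sub_pos.2 hθ
  have hconst : (1 - θ) ^ (α * (1 - Fintype.card ι)) =
      (1 - θ) ^ α / ((1 - θ) ^ α) ^ Fintype.card ι := by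
    rw [mul_sub, mul_one, Real.rpow_sub hc, Real.rpow_mul_natCast hc.le]
  have hanti : AntitoneOn φ (Set.Ici 0) :=
    (negativeBinomialGenerator.antitoneOn hθ hα.le).congr fun t ht ↦ (hφ t ht).symm
  have hpos : ∀ t ∈ Set.Ici 0, 0 < φ t := fun t ht ↦ hφ t ht ▸ negativeBinomialGenerator.pos hθ ht
  have htail : Tendsto (fun t ↦ φ t * Real.exp (α * t)) atTop (𝓝 ((1 - θ) ^ α)) := by
    refine (negativeBinomialGenerator.tendsto_mul_exp hθ).congr' ?_
    filter_upwards [eventually_ge_atTop 0] with t ht using by rw [hφ t ht]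
  have hinv_near : ∀ᶠ u in 𝓝[>] 0, 0 ≤ φinv u ∧ φ (φinv u) = u :=
    mem_of_superset (Ioc_mem_nhdsGT one_pos) hinv
  rw [hconst]
  exact tendsto_archimedeanCopula_div_pow hanti hpos htail (Real.rpow_pos_of_pos hc α).ne'
    hinv_near hw

/-- Example 3.7 (negative binomial): the second-order lower tail dependence
function of the associated bivariate Archimedean copula is
`(1-θ)^{-α} w₁ w₂`. -/
theorem negative_binomial_copula_second_order_tail_dependence
    (θ α : ℝ) (hθ0 : 0 ≤ θ) (hθ1 : θ < 1) (hα : 0 < α)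
    (φ φinv : ℝ → ℝ)
    (hφ : ∀ t ≥ (0:ℝ),
      φ t = ((1 - θ) * Real.exp (-t) / (1 - θ * Real.exp (-t))) ^ α)
    (hinv : ∀ u ∈ Set.Ioc (0:ℝ) 1, 0 ≤ φinv u ∧ φ (φinv u) = u)
    (w₁ w₂ : ℝ) (hw₁ : 0 < w₁) (hw₂ : 0 < w₂) :
    Tendsto (fun u => φ (φinv (u * w₁) + φinv (u * w₂)) / u ^ 2)
      (𝓝[>] (0:ℝ)) (𝓝 ((1 - θ) ^ (-α) * w₁ * w₂)) := by
  simpa [archimedeanCopula, mul_assoc, show (1 - 2 : ℝ) = -1 by norm_num] using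
    negative_binomial_copula_second_order_tail_dependence_general hθ1 hα hφ hinv
      (Fin.forall_fin_two (p := fun i ↦ 0 < ![w₁, w₂] i).2 ⟨hw₁, hw₂⟩)
end
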